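/- arXiv:2108.04544 — 9 statements merged into one kernel-verified Lean document; each statement's English description precedes it below -/
import Mathlib

section
/- Let R be a commutative ring equipped with a ring endomorphism σ : R → R. Suppose X and Y are nonempty, disjoint, Zariski-closed subsets of Spec R with X ∪ Y = Spec R, and each of X and Y is stable under the map p ↦ σ⁻¹(p). Then there exists an idempotent e ∈ R with σ(e) = e, e ≠ 0, e ≠ 1, such that X = V(e) and Y = V(1−e). -/
/-!
The closed set `X` has closed complement `Y`, so it is clopen and `X = V(e)` for an idempotent `e`.
Stability of both `X` and its complement says that the preimage of `X` under `p ↦ σ⁻¹(p)` is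
exactly `X`; as this preimage is `V(σ e)` and an idempotent is determined by its zero locus,
`σ e = e`.
-/

open PrimeSpectrum

theorem zeroLocus_singleton_injOn_isIdempotentElem {R : Type*} [CommSemiring R] :
    {e : R | IsIdempotentElem e}.InjOn fun e ↦ zeroLocus {e} := by
  intro e he e' he' heq
  refine basicOpen_injOn_isIdempotentElem he he' (TopologicalSpace.Opens.ext ?_)
  simpa only [basicOpen_eq_zeroLocus_compl, compl_inj_iff] using heq

theorem preimage_comap_zeroLocus_singleton_eq_iff {R S : Type*} [CommSemiring R] [CommSemiring S]
    (f : R →+* S) {e : R} {e' : S} (he : IsIdempotentElem e) (he' : IsIdempotentElem e') :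
    comap f ⁻¹' zeroLocus {e} = zeroLocus {e'} ↔ f e = e' := by
  rw [preimage_comap_zeroLocus, Set.image_singleton]
  exact zeroLocus_singleton_injOn_isIdempotentElem.eq_iff (he.map f) he'

/-- If `Spec R` decomposes as a disjoint union of two nonempty Zariski-closed
subsets `X`, `Y`, each stable under `p ↦ σ⁻¹(p)`, then there is a nontrivial constant
idempotent `e ∈ R` with `X = V(e)` and `Y = V(1-e)`. -/
theorem stmt1 {R : Type*} [CommRing R] (σ : R →+* R)
    (X Y : Set (PrimeSpectrum R))
    (hXne : X.Nonempty) (hYne : Y.Nonempty)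
    (hdisj : Disjoint X Y) (hunion : X ∪ Y = Set.univ)
    (hXclosed : IsClosed X) (hYclosed : IsClosed Y)
    (hXinv : ∀ p ∈ X, PrimeSpectrum.comap σ p ∈ X)
    (hYinv : ∀ p ∈ Y, PrimeSpectrum.comap σ p ∈ Y) :
    ∃ e : R, σ e = e ∧ e * e = e ∧ e ≠ 0 ∧ e ≠ 1 ∧
      X = PrimeSpectrum.zeroLocus ({e} : Set R) ∧
      Y = PrimeSpectrum.zeroLocus ({1 - e} : Set R) := by
  obtain rfl : Xᶜ = Y := (IsCompl.of_eq hdisj.eq_bot hunion).compl_eq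
  have hXclopen : IsClopen X := ⟨hXclosed, isClosed_compl_iff.mp hYclosed⟩
  obtain ⟨e, he, rfl⟩ := isClopen_iff_zeroLocus.mp hXclopen
  have hpreimage : comap σ ⁻¹' zeroLocus {e} = zeroLocus {e} :=
    Set.ext fun _ ↦ Set.MapsTo.mem_iff hXinv hYinv
  have hσe : σ e = e := (preimage_comap_zeroLocus_singleton_eq_iff σ he he).mp hpreimage
  have he_ne_zero : e ≠ 0 := by
    rintro rfl
    simp at hYne
  have he_ne_one : e ≠ 1 := by
    rintro rfl
    simp at hXne
  have hcompl : (zeroLocus {e})ᶜ = zeroLocus {1 - e} := by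
    rw [← basicOpen_eq_zeroLocus_compl, basicOpen_eq_zeroLocus_of_isIdempotentElem e he]
  exact ⟨e, hσe, he, he_ne_zero, he_ne_one, rfl, hcompl⟩
end

section
/- Let R be a commutative ring equipped with a ring endomorphism σ : R → R, and let e₁, …, eₙ ∈ R be nonzero constant idempotents (σ(eᵢ) = eᵢ, eᵢ² = eᵢ) that are pairwise orthogonal (eᵢej = 0 for i ≠ j) with e₁ + ⋯ + eₙ = 1, and such that no eᵢ can be written as a sum a + b of two nonzero constant orthogonal idempotents a, b (a² = a, b² = b, σ(a) = a, σ(b) = b, ab = 0). Then the sets V(1−e₁), …, V(1−eₙ) are pairwise disjoint, nonempty, their union is Spec R, each is Zariski-closed and stable under p ↦ σ⁻¹(p), and each V(1−eᵢ) is σ-connected, i.e. V(1−eᵢ) cannot be written as a disjoint union of two nonempty subsets that are Zariski-closed in Spec R and stable under p ↦ σ⁻¹(p). -/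
/-!
Idempotents of `R` correspond bijectively to clopen subsets of `Spec R` through `a ↦ D(a)`, and
`V(1 - e) = D(e)` for `e` idempotent. Since `p ↦ σ⁻¹(p)` pulls `D(a)` back to `D(σ a)`, the
constant idempotents correspond to the clopen sets that equal their own preimage. If `D(e)`, with
`e` constant, is a disjoint union of σ-closed sets `X` and `Y`, then `X` is clopen, and it equals
its own preimage because `D(e)` does and `Y` is stable. Hence `X = D(a)` for a constant idempotent
`a`, and `e = a + (e - a)` splits `e` as soon as `X` and `Y` are nonempty.
-/

open PrimeSpectrum

theorem preimage_eq_self_of_mapsTo_of_disjoint {α : Type*} {f : α → α} {s t : Set α}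
    (hst : Disjoint s t) (hs : Set.MapsTo f s s) (ht : Set.MapsTo f t t)
    (hunion : f ⁻¹' (s ∪ t) ⊆ s ∪ t) : f ⁻¹' s = s := by
  refine Set.Subset.antisymm (fun x hx ↦ ?_) hs
  exact (hunion (Or.inl hx)).resolve_right fun hxt ↦ hst.notMem_of_mem_left hx (ht hxt)

theorem isClopen_left_of_disjoint_of_isOpen_union {α : Type*} [TopologicalSpace α] {s t : Set α}
    (hst : Disjoint s t) (hs : IsClosed s) (ht : IsClosed t) (hunion : IsOpen (s ∪ t)) :
    IsClopen s := by
  refine ⟨hs, ?_⟩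
  rw [← hst.sup_sdiff_cancel_right]
  exact hunion.sdiff ht

section BasicOpen

variable {R : Type*} [CommRing R] {a e : R}

theorem disjoint_basicOpen_of_mul_eq_zero (hae : a * e = 0) :
    Disjoint (basicOpen a : Set (PrimeSpectrum R)) (basicOpen e) := by
  rw [Set.disjoint_iff_inter_eq_empty, ← TopologicalSpace.Opens.coe_inf, ← basicOpen_mul, hae,
    basicOpen_zero, TopologicalSpace.Opens.coe_bot]

theorem basicOpen_nonempty_of_isIdempotentElem (he : IsIdempotentElem e) (hne : e ≠ 0) :
    (basicOpen e : Set (PrimeSpectrum R)).Nonempty := by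
  rw [Set.nonempty_iff_ne_empty, ne_eq, TopologicalSpace.Opens.coe_eq_empty,
    basicOpen_eq_bot_iff]
  exact fun hnil ↦ hne (he.eq_zero_of_isNilpotent hnil)

theorem iUnion_basicOpen_eq_univ_of_sum_eq_one {ι : Type*} [Fintype ι] {f : ι → R}
    (hsum : ∑ i, f i = 1) : ⋃ i, (basicOpen (f i) : Set (PrimeSpectrum R)) = Set.univ := by
  have hspan : Ideal.span (Set.range f) = ⊤ := by
    rw [Ideal.eq_top_iff_one, ← hsum]
    exact sum_mem fun i _ ↦ Ideal.subset_span (Set.mem_range_self i)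
  rw [← TopologicalSpace.Opens.coe_iSup, iSup_basicOpen_eq_top_iff.mpr hspan,
    TopologicalSpace.Opens.coe_top]

theorem mul_eq_left_of_basicOpen_le (ha : IsIdempotentElem a) (he : IsIdempotentElem e)
    (hle : basicOpen a ≤ basicOpen e) : a * e = a :=
  basicOpen_injOn_isIdempotentElem (ha.mul he) ha <| by rw [basicOpen_mul, inf_eq_left.mpr hle]

variable {σ : R →+* R}

theorem preimage_comap_basicOpen_eq_self (hσ : σ e = e) :
    comap σ ⁻¹' (basicOpen e : Set (PrimeSpectrum R)) = basicOpen e :=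
  congrArg (fun x ↦ (basicOpen x : Set (PrimeSpectrum R))) hσ

theorem map_eq_self_of_preimage_comap_basicOpen (ha : IsIdempotentElem a)
    (hpre : comap σ ⁻¹' (basicOpen a : Set (PrimeSpectrum R)) = basicOpen a) : σ a = a :=
  basicOpen_injOn_isIdempotentElem (ha.map σ) ha (TopologicalSpace.Opens.ext hpre)

/-- `e` is decomposable relative to `σ`: it is a sum of two nonzero orthogonal idempotents fixed by
`σ`. This is the property that the hypothesis on the `eᵢ` rules out. -/
def SplitsIntoConstantIdempotents (σ : R →+* R) (e : R) : Prop :=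
  ∃ a b : R, a ≠ 0 ∧ b ≠ 0 ∧ a * a = a ∧ b * b = b ∧
    σ a = a ∧ σ b = b ∧ a * b = 0 ∧ e = a + b

theorem splitsIntoConstantIdempotents_of_isClopen_ssubset (he : IsIdempotentElem e)
    (hσ : σ e = e) {X : Set (PrimeSpectrum R)} (hX : IsClopen X) (hne : X.Nonempty)
    (hss : X ⊂ basicOpen e) (hpre : comap σ ⁻¹' X = X) :
    SplitsIntoConstantIdempotents σ e := by
  obtain ⟨a, ha, rfl⟩ := exists_idempotent_basicOpen_eq_of_isClopen hX
  have hσa : σ a = a := map_eq_self_of_preimage_comap_basicOpen ha hpre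
  have hae : a * e = a := mul_eq_left_of_basicOpen_le ha he hss.subset
  have ha_ne : a ≠ 0 := by
    rintro rfl
    simp at hne
  have hb_ne : e - a ≠ 0 := fun h ↦ hss.ne (by rw [sub_eq_zero.mp h])
  have hb : IsIdempotentElem (e - a) := ha.sub he hae (mul_comm e a ▸ hae)
  exact ⟨a, e - a, ha_ne, hb_ne, ha, hb, hσa, by rw [map_sub, hσ, hσa],
    by rw [mul_sub, hae, ha.eq, sub_self], (add_sub_cancel a e).symm⟩

theorem splitsIntoConstantIdempotents_of_disjoint_union (he : IsIdempotentElem e)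
    (hσ : σ e = e) {X Y : Set (PrimeSpectrum R)} (hXne : X.Nonempty) (hYne : Y.Nonempty)
    (hXY : Disjoint X Y) (hunion : X ∪ Y = basicOpen e) (hX : IsClosed X) (hY : IsClosed Y)
    (hXσ : Set.MapsTo (comap σ) X X) (hYσ : Set.MapsTo (comap σ) Y Y) :
    SplitsIntoConstantIdempotents σ e := by
  have hclopen : IsClopen X :=
    isClopen_left_of_disjoint_of_isOpen_union hXY hX hY (hunion ▸ (basicOpen e).isOpen)
  have hpre : comap σ ⁻¹' X = X := preimage_eq_self_of_mapsTo_of_disjoint hXY hXσ hYσ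
    (by rw [hunion, preimage_comap_basicOpen_eq_self hσ])
  have hss : X ⊂ basicOpen e := by
    obtain ⟨y, hy⟩ := hYne
    exact hunion ▸ ⟨Set.subset_union_left,
      fun hle ↦ hXY.notMem_of_mem_right hy (hle (Or.inr hy))⟩
  exact splitsIntoConstantIdempotents_of_isClopen_ssubset he hσ hclopen hXne hss hpre

end BasicOpen

/-- If `e₁, …, eₙ` are nonzero constant orthogonal idempotents summing to `1`
such that no `eᵢ` splits as a sum of two nonzero constant orthogonal idempotents, then the
sets `V(1-eᵢ)` are the σ-connected components of `Spec R`: they are pairwise disjoint,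
nonempty, cover `Spec R`, are Zariski-closed and stable under `p ↦ σ⁻¹(p)`, and each is
σ-connected. -/
theorem stmt3 {R : Type*} [CommRing R] (σ : R →+* R) (n : ℕ) (e : Fin n → R)
    (hconst : ∀ i, σ (e i) = e i)
    (hidem : ∀ i, e i * e i = e i)
    (hne : ∀ i, e i ≠ 0)
    (horth : ∀ i j, i ≠ j → e i * e j = 0)
    (hsum : ∑ i, e i = 1)
    (hnosplit : ∀ i, ¬ ∃ a b : R, a ≠ 0 ∧ b ≠ 0 ∧ a * a = a ∧ b * b = b ∧
      σ a = a ∧ σ b = b ∧ a * b = 0 ∧ e i = a + b) :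
    (∀ i j, i ≠ j →
      Disjoint (PrimeSpectrum.zeroLocus ({1 - e i} : Set R))
        (PrimeSpectrum.zeroLocus ({1 - e j} : Set R))) ∧
    (∀ i, (PrimeSpectrum.zeroLocus ({1 - e i} : Set R)).Nonempty) ∧
    (⋃ i, PrimeSpectrum.zeroLocus ({1 - e i} : Set R)) = Set.univ ∧
    (∀ i, IsClosed (PrimeSpectrum.zeroLocus ({1 - e i} : Set R))) ∧
    (∀ i, ∀ p ∈ PrimeSpectrum.zeroLocus ({1 - e i} : Set R),
      PrimeSpectrum.comap σ p ∈ PrimeSpectrum.zeroLocus ({1 - e i} : Set R)) ∧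
    (∀ i, ¬ ∃ X Y : Set (PrimeSpectrum R),
      X.Nonempty ∧ Y.Nonempty ∧ Disjoint X Y ∧
      X ∪ Y = PrimeSpectrum.zeroLocus ({1 - e i} : Set R) ∧
      IsClosed X ∧ IsClosed Y ∧
      (∀ p ∈ X, PrimeSpectrum.comap σ p ∈ X) ∧
      (∀ p ∈ Y, PrimeSpectrum.comap σ p ∈ Y)) := by
  have hV : ∀ i, zeroLocus ({1 - e i} : Set R) = basicOpen (e i) :=
    fun i ↦ (basicOpen_eq_zeroLocus_of_isIdempotentElem (e i) (hidem i)).symm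
  refine ⟨?_, ?_, ?_, fun i ↦ isClosed_zeroLocus _, ?_, ?_⟩ <;> simp only [hV]
  · exact fun i j hij ↦ disjoint_basicOpen_of_mul_eq_zero (horth i j hij)
  · exact fun i ↦ basicOpen_nonempty_of_isIdempotentElem (hidem i) (hne i)
  · exact iUnion_basicOpen_eq_univ_of_sum_eq_one hsum
  · exact fun i ↦ (preimage_comap_basicOpen_eq_self (hconst i)).ge
  · rintro i ⟨X, Y, hXne, hYne, hXY, hunion, hX, hY, hXσ, hYσ⟩
    exact hnosplit i <| splitsIntoConstantIdempotents_of_disjoint_union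
      (hidem i) (hconst i) hXne hYne hXY hunion hX hY hXσ hYσ
end

section
/- Let R be a commutative ring equipped with a ring endomorphism σ : R → R. Let d₁, …, d_m ∈ R be pairwise distinct nonzero idempotents that are pairwise orthogonal (d_j d_l = 0 for j ≠ l), satisfy d₁ + ⋯ + d_m = 1, and are primitive in the sense that no d_j is a sum of two nonzero orthogonal idempotents. Assume σ permutes the d_j, i.e. there is a permutation τ of {1, …, m} with σ(d_j) = d_{τ(j)} for all j. For each orbit A of τ on {1, …, m} set e_A = Σ_{j∈A} d_j. Then the elements e_A (A ranging over the orbits of τ) are idempotents fixed by σ, pairwise orthogonal, their sum is 1, and no e_A can be written as a sum a + b of two nonzero orthogonal idempotents a, b with σ(a) = a and σ(b) = b. -/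
/-!
If `e_A = a + b` with `a`, `b` orthogonal `σ`-fixed idempotents and `j ∈ A`, then
`d j = d j * a + d j * b` splits `d j`, so primitivity of `d j` gives `d j * a = 0` or
`d j * b = 0`, say `d j * a = 0`. Applying `σ` repeatedly carries this equation around the whole
orbit `A`, so that `a = e_A * a = 0`.
-/

section Indecomposable

variable {R : Type*} [CommSemiring R]

/-- `e` is not the sum of two nonzero orthogonal idempotents. This is primitivity of an idempotent,
except that `0` is allowed. -/
def IsIndecomposable (e : R) : Prop :=
  ¬ ∃ a b : R, a ≠ 0 ∧ b ≠ 0 ∧ a * a = a ∧ b * b = b ∧ a * b = 0 ∧ e = a + b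

/-- The analogue of `IsIndecomposable` for the constant elements of `(R, σ)`: `e` is not the sum of
two nonzero orthogonal idempotents fixed by `σ`. -/
def IsFixedIndecomposable (σ : R →+* R) (e : R) : Prop :=
  ¬ ∃ a b : R, a ≠ 0 ∧ b ≠ 0 ∧ a * a = a ∧ b * b = b ∧ a * b = 0 ∧ σ a = a ∧ σ b = b ∧ e = a + b

theorem IsIndecomposable.mul_eq_zero_or_mul_eq_zero {d a b : R}
    (hprim : IsIndecomposable d) (hd : IsIdempotentElem d) (ha : IsIdempotentElem a)
    (hb : IsIdempotentElem b) (hab : a * b = 0) (hdab : d * (a + b) = d) :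
    d * a = 0 ∨ d * b = 0 := by
  by_contra! ⟨hda, hdb⟩
  have horth : d * a * (d * b) = 0 := by rw [mul_mul_mul_comm, hab, mul_zero]
  exact hprim ⟨d * a, d * b, hda, hdb, hd.mul ha, hd.mul hb, horth, by rw [← mul_add, hdab]⟩

end Indecomposable

section Partition

variable {ι : Type*}

theorem sum_parts_sum [DecidableEq ι] {M : Type*} [AddCommMonoid M] {s : Finset ι}
    (P : Finpartition s) (f : ι → M) : ∑ A ∈ P.parts, ∑ j ∈ A, f j = ∑ j ∈ s, f j := by
  conv_rhs => rw [← P.biUnion_parts, Finset.sum_biUnion P.disjoint]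
  rfl

theorem mem_parts_ofSetoid_iff [Fintype ι] [DecidableEq ι] (r : Setoid ι) [DecidableRel r.r]
    {A : Finset ι} :
    A ∈ (Finpartition.ofSetoid r).parts ↔ ∃ j, ∀ l, l ∈ A ↔ r j l := by
  simp only [Finpartition.ofSetoid, Finpartition.ofSetSetoid_parts, Finset.mem_image,
    Finset.mem_univ, true_and, Finset.ext_iff, Finset.mem_filter, iff_comm (b := _ ∈ A)]

theorem sum_mul_sum_eq_zero_of_disjoint {R : Type*} [Semiring R] {d : ι → R}
    (hd : OrthogonalIdempotents d) {A B : Finset ι} (hAB : Disjoint A B) :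
    (∑ j ∈ A, d j) * ∑ j ∈ B, d j = 0 := by
  rw [Finset.sum_mul]
  exact Finset.sum_eq_zero fun j hj ↦ hd.mul_sum_of_notMem (Finset.disjoint_left.mp hAB hj)

theorem completeOrthogonalIdempotents_sum_parts [Fintype ι] [DecidableEq ι] {R : Type*} [Semiring R]
    {d : ι → R} (hd : CompleteOrthogonalIdempotents d) (P : Finpartition (.univ : Finset ι)) :
    CompleteOrthogonalIdempotents fun A : P.parts ↦ ∑ j ∈ A.1, d j where
  idem _ := hd.isIdempotentElem_sum
  ortho A B hAB := sum_mul_sum_eq_zero_of_disjoint hd.toOrthogonalIdempotents <|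
    P.disjoint A.2 B.2 (Subtype.coe_ne_coe.mpr hAB)
  complete := by
    rw [Finset.sum_coe_sort P.parts fun A ↦ ∑ j ∈ A, d j, sum_parts_sum, hd.complete]

end Partition

section Orbit

variable {ι R : Type*} {τ : Equiv.Perm ι} {d : ι → R}

theorem map_sum_eq_self_of_apply_mem_iff [AddCommMonoid R] {F : Type*} [FunLike F R R]
    [AddMonoidHomClass F R R] {σ : F} (hτ : ∀ j, σ (d j) = d (τ j)) {A : Finset ι}
    (hA : ∀ j, τ j ∈ A ↔ j ∈ A) :
    σ (∑ j ∈ A, d j) = ∑ j ∈ A, d j := by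
  rw [map_sum]
  exact Finset.sum_equiv τ (fun j ↦ (hA j).symm) fun j _ ↦ hτ j

theorem mul_eq_zero_of_sameCycle [Finite ι] [Semiring R] {σ : R →+* R}
    (hτ : ∀ j, σ (d j) = d (τ j)) {c : R} (hc : σ c = c) {j l : ι} (hjl : τ.SameCycle j l)
    (hj : d j * c = 0) : d l * c = 0 := by
  obtain ⟨n, rfl⟩ := hjl.exists_nat_pow_eq
  clear hjl
  induction n with
  | zero => exact hj
  | succ n ih =>
    calc d ((τ ^ (n + 1)) j) * c
      _ = σ (d ((τ ^ n) j) * c) := by rw [map_mul, hτ, hc, pow_succ', Equiv.Perm.mul_apply]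
      _ = 0 := by rw [ih, map_zero]

theorem isFixedIndecomposable_sum_of_sameCycle [Finite ι] [CommSemiring R] {σ : R →+* R}
    (hd : OrthogonalIdempotents d) (hτ : ∀ j, σ (d j) = d (τ j)) {A : Finset ι} {j : ι}
    (hprim : IsIndecomposable (d j)) (hjA : j ∈ A) (hA : ∀ l ∈ A, τ.SameCycle j l) :
    IsFixedIndecomposable σ (∑ l ∈ A, d l) := by
  rintro ⟨a, b, ha₀, hb₀, ha, hb, hab, hσa, hσb, hsum⟩
  have eq_zero {c : R} (hσc : σ c = c) (hc : (∑ l ∈ A, d l) * c = c) (hj : d j * c = 0) :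
      c = 0 := by
    rw [← hc, Finset.sum_mul]
    exact Finset.sum_eq_zero fun l hl ↦ mul_eq_zero_of_sameCycle hτ hσc (hA l hl) hj
  have sum_mul_a : (∑ l ∈ A, d l) * a = a := by rw [hsum, add_mul, ha, mul_comm b, hab, add_zero]
  have sum_mul_b : (∑ l ∈ A, d l) * b = b := by rw [hsum, add_mul, hb, hab, zero_add]
  have d_mul_add : d j * (a + b) = d j := by rw [← hsum, hd.mul_sum_of_mem hjA]
  rcases hprim.mul_eq_zero_or_mul_eq_zero (hd.idem j) ha hb hab d_mul_add with hja | hjb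
  · exact ha₀ (eq_zero hσa sum_mul_a hja)
  · exact hb₀ (eq_zero hσb sum_mul_b hjb)

end Orbit

theorem stmt5_general {ι R : Type*} [Fintype ι] [CommSemiring R] (σ : R →+* R) {d : ι → R}
    (hd : CompleteOrthogonalIdempotents d) (hprim : ∀ j, IsIndecomposable (d j))
    (τ : Equiv.Perm ι) (hτ : ∀ j, σ (d j) = d (τ j)) (O : Finset (Finset ι))
    (hO : ∀ A : Finset ι, A ∈ O ↔ ∃ j, ∀ l, l ∈ A ↔ τ.SameCycle j l) :
    (∀ A ∈ O, σ (∑ j ∈ A, d j) = ∑ j ∈ A, d j) ∧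
    (∀ A ∈ O, IsIdempotentElem (∑ j ∈ A, d j)) ∧
    (∀ A ∈ O, ∀ B ∈ O, A ≠ B → (∑ j ∈ A, d j) * (∑ j ∈ B, d j) = 0) ∧
    (∑ A ∈ O, ∑ j ∈ A, d j = 1) ∧
    (∀ A ∈ O, IsFixedIndecomposable σ (∑ j ∈ A, d j)) := by
  classical
  obtain ⟨P, rfl⟩ : ∃ P : Finpartition (.univ : Finset ι), P.parts = O :=
    ⟨.ofSetoid (Equiv.Perm.SameCycle.setoid τ),
      Finset.ext fun A ↦ (mem_parts_ofSetoid_iff _).trans (hO A).symm⟩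
  have hP := completeOrthogonalIdempotents_sum_parts hd P
  refine ⟨fun A hA ↦ ?fixed, fun A hA ↦ hP.idem ⟨A, hA⟩,
    fun A hA B hB hAB ↦ hP.ortho (i := ⟨A, hA⟩) (j := ⟨B, hB⟩) (Subtype.coe_ne_coe.mp hAB),
    (Finset.sum_coe_sort P.parts _).symm.trans hP.complete, fun A hA ↦ ?indecomposable⟩
  all_goals obtain ⟨j, hj⟩ := (hO A).mp hA
  case fixed =>
    refine map_sum_eq_self_of_apply_mem_iff hτ fun l ↦ ?_
    rw [hj, hj, Equiv.Perm.sameCycle_apply_right]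
  case indecomposable =>
    exact isFixedIndecomposable_sum_of_sameCycle hd.toOrthogonalIdempotents hτ (hprim j)
      ((hj j).mpr (.refl τ j)) fun l ↦ (hj l).mp

/-- Let `d₁, …, d_m` be the (pairwise distinct, pairwise orthogonal,
primitive) nonzero idempotents of `R` summing to `1`, permuted by `σ` via a permutation `τ`.
For each orbit `A` of `τ`, the element `e_A = Σ_{j∈A} d_j` is a σ-fixed idempotent; the `e_A`
are pairwise orthogonal, sum to `1`, and none splits as a sum of two nonzero orthogonal
σ-fixed idempotents. -/
theorem stmt5 {R : Type*} [CommRing R] (σ : R →+* R) (m : ℕ) (d : Fin m → R)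
    (hinj : Function.Injective d)
    (hne : ∀ j, d j ≠ 0)
    (hidem : ∀ j, d j * d j = d j)
    (horth : ∀ j l, j ≠ l → d j * d l = 0)
    (hsum : ∑ j, d j = 1)
    (hprim : ∀ j, ¬ ∃ a b : R, a ≠ 0 ∧ b ≠ 0 ∧ a * a = a ∧ b * b = b ∧ a * b = 0 ∧
      d j = a + b)
    (τ : Equiv.Perm (Fin m)) (hτ : ∀ j, σ (d j) = d (τ j))
    (O : Finset (Finset (Fin m)))
    (hO : ∀ A : Finset (Fin m), A ∈ O ↔ ∃ j, ∀ l, l ∈ A ↔ τ.SameCycle j l) :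
    (∀ A ∈ O, σ (∑ j ∈ A, d j) = ∑ j ∈ A, d j) ∧
    (∀ A ∈ O, (∑ j ∈ A, d j) * (∑ j ∈ A, d j) = ∑ j ∈ A, d j) ∧
    (∀ A ∈ O, ∀ B ∈ O, A ≠ B → (∑ j ∈ A, d j) * (∑ j ∈ B, d j) = 0) ∧
    (∑ A ∈ O, ∑ j ∈ A, d j = 1) ∧
    (∀ A ∈ O, ¬ ∃ a b : R, a ≠ 0 ∧ b ≠ 0 ∧ a * a = a ∧ b * b = b ∧ a * b = 0 ∧
      σ a = a ∧ σ b = b ∧ ∑ j ∈ A, d j = a + b) :=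
  stmt5_general σ ⟨⟨hidem, horth⟩, hsum⟩ hprim τ hτ O hO
end

section
/- Let k be a field with a ring endomorphism σ_k : k → k, let K be a separable algebraic closure of k, and let σ_K : K → K be a ring endomorphism with σ_K(algebraMap k K λ) = algebraMap k K (σ_k λ) for all λ ∈ k. Then for every k-algebra automorphism τ of K there exists a unique k-algebra automorphism τ′ of K such that σ_K(τ′(x)) = τ(σ_K(x)) for all x ∈ K; moreover the resulting map τ ↦ τ′ is a group homomorphism from Gal(K/k) to itself that is continuous with respect to the Krull topology. -/
/-!
More generally, let `σ_K : K → K'` extend `σ_k : k → k'`, with `K/k` normal. Regard `K'` as a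
`k`-algebra through `σ_K`. Every `k'`-automorphism `τ` of `K'` is then `k`-linear, so by normality
it preserves the image of `K`, and transporting its restriction along `σ_K` gives `τ'`. As `τ'`
fixes `x` exactly when `τ` fixes `σ_K x`, which is integral over `k'`, stabilizers of elements pull
back to open subgroups. This suffices for continuity, since fixing a finite extension means fixing
its finitely many generators.
-/

section KrullTopology

variable {F L : Type*} [Field F] [Field L] [Algebra F L]

theorem isOpen_stabilizer_of_isIntegral {x : L} (hx : IsIntegral F x) :
    IsOpen (MulAction.stabilizer Gal(L/F) x : Set Gal(L/F)) := by
  have : FiniteDimensional F (IntermediateField.adjoin F {x}) :=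
    IntermediateField.adjoin.finiteDimensional hx
  refine Subgroup.isOpen_mono (fun τ hτ ↦ ?_)
    (IntermediateField.adjoin F {x}).fixingSubgroup_isOpen
  exact (IntermediateField.mem_fixingSubgroup_iff _ τ).1 hτ x
    (IntermediateField.mem_adjoin_simple_self F x)

theorem exists_finset_iInf_stabilizer_le_fixingSubgroup
    (E : IntermediateField F L) [FiniteDimensional F E] :
    ∃ S : Finset L, (∀ x ∈ S, IsIntegral F x) ∧
      ⨅ x ∈ S, MulAction.stabilizer Gal(L/F) x ≤ E.fixingSubgroup := by
  obtain ⟨S, hS⟩ : E.FG := IntermediateField.essFiniteType_iff.1 inferInstance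
  refine ⟨S, fun x hx ↦ ?_, fun τ hτ ↦ ?_⟩
  · have hxE : x ∈ E := hS ▸ IntermediateField.subset_adjoin F _ hx
    exact (Algebra.IsIntegral.isIntegral (R := F) (⟨x, hxE⟩ : E)).map E.val
  · simp only [Subgroup.mem_iInf, MulAction.mem_stabilizer_iff] at hτ
    rw [IntermediateField.mem_fixingSubgroup_iff, ← hS]
    exact (IntermediateField.forall_mem_adjoin_smul_eq_self_iff F τ).2 hτ

theorem continuous_of_isOpen_comap_stabilizer {G : Type*} [Group G] [TopologicalSpace G]
    [IsTopologicalGroup G] (φ : G →* Gal(L/F))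
    (hφ : ∀ x : L, IsIntegral F x →
      IsOpen ((MulAction.stabilizer Gal(L/F) x).comap φ : Set G)) :
    Continuous φ := by
  refine continuous_of_tendsto_nhds_one φ fun A hA ↦ ?_
  rw [Filter.mem_map]
  obtain ⟨E, _, hEA⟩ := (krullTopology_mem_nhds_one_iff F L A).1 hA
  obtain ⟨S, hS, hSE⟩ := exists_finset_iInf_stabilizer_le_fixingSubgroup E
  have hnhds : (⋂ x ∈ S, ((MulAction.stabilizer Gal(L/F) x).comap φ : Set G)) ∈ nhds 1 :=
    (Filter.biInter_finset_mem S).2 fun x hx ↦ (hφ x (hS x hx)).mem_nhds (one_mem _)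
  refine Filter.mem_of_superset hnhds fun g hg ↦ hEA (hSE ?_)
  simpa only [Set.mem_iInter, SetLike.mem_coe, Subgroup.mem_comap, Subgroup.mem_iInf] using hg

end KrullTopology

section Restriction

variable (k K k' K' : Type*) [Field k] [Field K] [Field k'] [Field K']
  [Algebra k K] [Algebra k' K'] [Algebra k k'] [Algebra K K'] [Algebra k K']
  [IsScalarTower k K K'] [IsScalarTower k k' K'] [Normal k K]

/-- For a commutative square of fields `k → K → K'`, `k → k' → K'` with `K/k` normal, the
restriction homomorphism `Gal(K'/k') → Gal(K/k)`. The square is encoded by two scalar towers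
ending in the same `k`-algebra structure on `K'`. -/
noncomputable def galPullback : Gal(K'/k') →* Gal(K/k) :=
  (AlgEquiv.restrictNormalHom K).comp (AlgEquiv.restrictScalarsHom k)

variable {k K k' K'}

theorem algebraMap_galPullback_apply (τ : Gal(K'/k')) (x : K) :
    algebraMap K K' (galPullback k K k' K' τ x) = τ (algebraMap K K' x) :=
  (τ.restrictScalars k).restrictNormal_commutes K x

theorem comap_galPullback_stabilizer (x : K) :
    (MulAction.stabilizer Gal(K/k) x).comap (galPullback k K k' K') =
      MulAction.stabilizer Gal(K'/k') (algebraMap K K' x) := by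
  ext τ
  simp only [Subgroup.mem_comap, MulAction.mem_stabilizer_iff, AlgEquiv.smul_def,
    ← algebraMap_galPullback_apply (k := k), (algebraMap K K').injective.eq_iff]

theorem continuous_galPullback : Continuous (galPullback k K k' K') := by
  refine continuous_of_isOpen_comap_stabilizer _ fun x hx ↦ ?_
  rw [comap_galPullback_stabilizer]
  exact isOpen_stabilizer_of_isIntegral (hx.algebraMap (B := K')).tower_top

end Restriction

theorem stmt6_general {k K k' K' : Type*} [Field k] [Field K] [Field k'] [Field K']
    [Algebra k K] [Algebra k' K'] [Normal k K] (σk : k →+* k') (σK : K →+* K')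
    (hext : ∀ lam : k, σK (algebraMap k K lam) = algebraMap k' K' (σk lam)) :
    (∀ τ : Gal(K'/k'), ∃! τ' : Gal(K/k), ∀ x : K, σK (τ' x) = τ (σK x)) ∧
    ∃ Φ : Gal(K'/k') →* Gal(K/k),
      Continuous Φ ∧ ∀ (τ : Gal(K'/k')) (x : K), σK (Φ τ x) = τ (σK x) := by
  let : Algebra k k' := σk.toAlgebra
  let : Algebra K K' := σK.toAlgebra
  let : Algebra k K' := (σK.comp (algebraMap k K)).toAlgebra
  have : IsScalarTower k K K' := .of_algebraMap_eq fun _ ↦ rfl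
  have : IsScalarTower k k' K' := .of_algebraMap_eq hext
  have hΦ : ∀ (τ : Gal(K'/k')) (x : K), σK (galPullback k K k' K' τ x) = τ (σK x) :=
    algebraMap_galPullback_apply
  refine ⟨fun τ ↦ ⟨galPullback k K k' K' τ, hΦ τ, fun τ' hτ' ↦ ?_⟩,
    galPullback k K k' K', continuous_galPullback, hΦ⟩
  exact AlgEquiv.ext fun x ↦ σK.injective ((hτ' x).trans (hΦ τ x).symm)

/-- Let `K` be a separable algebraic closure of the difference field
`(k, σₖ)` and `σ_K : K → K` an extension of `σₖ`. For every `τ ∈ Gal(K/k)` there is a unique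
`τ' ∈ Gal(K/k)` with `σ_K ∘ τ' = τ ∘ σ_K`, and `τ ↦ τ'` is a continuous group endomorphism
of `Gal(K/k)` for the Krull topology. -/
theorem stmt6 {k K : Type*} [Field k] [Field K] [Algebra k K] [IsSepClosure k K]
    (σk : k →+* k) (σK : K →+* K)
    (hext : ∀ lam : k, σK (algebraMap k K lam) = algebraMap k K (σk lam)) :
    (∀ τ : K ≃ₐ[k] K, ∃! τ' : K ≃ₐ[k] K, ∀ x : K, σK (τ' x) = τ (σK x)) ∧
    ∃ Φ : (K ≃ₐ[k] K) →* (K ≃ₐ[k] K),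
      Continuous Φ ∧ ∀ (τ : K ≃ₐ[k] K) (x : K), σK (Φ τ x) = τ (σK x) :=
  stmt6_general σk σK hext
end

section
/- Let k be a field with a ring endomorphism σ_k : k → k, let K be a separable algebraic closure of k, and let σ_K : K → K be a ring endomorphism with σ_K(algebraMap k K λ) = algebraMap k K (σ_k λ) for all λ ∈ k. Let T be a commutative k-algebra such that every element of T is a root of some monic separable polynomial with coefficients in k, and let α : T → K be a ring homomorphism satisfying α((algebraMap k T λ) · a) = (algebraMap k K (σ_k λ)) · α(a) for all λ ∈ k and a ∈ T. Then there exists a unique k-algebra homomorphism β : T → K such that σ_K(β(a)) = α(a) for all a ∈ T. -/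
/-!
A separable polynomial over a separably closed field `K` has all its roots in `K`, so an embedding
`φ : K → L` into a domain hits every root in `L` of its image. If `α : T → L` agrees with `φ` on
`k`, it sends a root in `T` of a separable polynomial over `k` to such a root in `L`. Hence `α`
lands in the image of `φ`, and `β` is `α` followed by the inverse of `φ` on its image.
-/

open Polynomial

theorem existsUnique_algHom_comp_eq_of_forall_mem_range {R A B C : Type*} [CommSemiring R]
    [Semiring A] [Semiring B] [Semiring C] [Algebra R A] [Algebra R C] {φ : A →+* B}
    (hφ : Function.Injective φ) {α : C →+* B}
    (hcomp : α.comp (algebraMap R C) = φ.comp (algebraMap R A))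
    (hrange : ∀ c, α c ∈ φ.rangeS) :
    ∃! β : C →ₐ[R] A, ∀ c, φ (β c) = α c := by
  choose b hb using hrange
  let β : C →ₐ[R] A :=
    { toFun := b
      map_one' := hφ (by rw [hb, map_one, map_one])
      map_mul' := fun x y ↦ hφ (by rw [hb, map_mul, map_mul, hb, hb])
      map_zero' := hφ (by rw [hb, map_zero, map_zero])
      map_add' := fun x y ↦ hφ (by rw [hb, map_add, map_add, hb, hb])
      commutes' := fun r ↦ hφ ((hb _).trans (RingHom.congr_fun hcomp r)) }
  exact ⟨β, hb, fun γ hγ ↦ AlgHom.ext fun c ↦ hφ ((hγ c).trans (hb c).symm)⟩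

theorem mem_range_of_separable_of_eval₂_eq_zero {K L : Type*} [Field K] [IsSepClosed K]
    [CommRing L] [IsDomain L] (φ : K →+* L) {q : K[X]} (hq : q.Separable) {y : L}
    (hy : q.eval₂ φ y = 0) : y ∈ φ.range :=
  (IsSepClosed.splits_of_separable q hq).mem_range_of_isRoot hq.ne_zero
    (by rwa [IsRoot, eval_map])

theorem stmt7_general {k K L T : Type*} [CommRing k] [Field K] [Algebra k K] [IsSepClosed K]
    [CommRing L] [IsDomain L] [Semiring T] [Algebra k T]
    (hroot : ∀ a : T, ∃ p : k[X], p.Separable ∧ aeval a p = 0)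
    (φ : K →+* L) (α : T →+* L) (hcomp : α.comp (algebraMap k T) = φ.comp (algebraMap k K)) :
    ∃! β : T →ₐ[k] K, ∀ a : T, φ (β a) = α a := by
  refine existsUnique_algHom_comp_eq_of_forall_mem_range φ.injective hcomp fun a ↦ ?_
  obtain ⟨p, hp, hpa⟩ := hroot a
  refine mem_range_of_separable_of_eval₂_eq_zero φ (hp.map (f := algebraMap k K)) ?_
  calc (p.map (algebraMap k K)).eval₂ φ (α a)
      = p.eval₂ (α.comp (algebraMap k T)) (α a) := by rw [eval₂_map, hcomp]
    _ = α (aeval a p) := (hom_eval₂ p (algebraMap k T) α a).symm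
    _ = 0 := by rw [hpa, map_zero]

/-- Let `K` be a separable algebraic closure of the difference field
`(k, σₖ)` with extension `σ_K` of `σₖ`, and let `T` be an ind-étale `k`-algebra (every
element is a root of a monic separable polynomial over `k`). Any ring homomorphism
`α : T → K` that is semilinear over `σₖ` factors uniquely as `α = σ_K ∘ β` for a `k`-algebra
homomorphism `β : T → K`. -/
theorem stmt7 {k K T : Type*} [Field k] [Field K] [Algebra k K] [IsSepClosure k K]
    (σk : k →+* k) (σK : K →+* K)
    (hext : ∀ lam : k, σK (algebraMap k K lam) = algebraMap k K (σk lam))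
    [CommRing T] [Algebra k T]
    (hindetale : ∀ a : T, ∃ p : Polynomial k, p.Monic ∧ p.Separable ∧
      Polynomial.aeval a p = 0)
    (α : T →+* K)
    (hα : ∀ (lam : k) (a : T), α (algebraMap k T lam * a) = algebraMap k K (σk lam) * α a) :
    ∃! β : T →ₐ[k] K, ∀ a : T, σK (β a) = α a := by
  have : IsSepClosed K := IsSepClosure.sep_closed k
  have hcomp : α.comp (algebraMap k T) = σK.comp (algebraMap k K) :=
    RingHom.ext fun lam ↦ by simpa [hext] using hα lam 1
  exact stmt7_general (fun a ↦ (hindetale a).imp fun _ ↦ And.right) σK α hcomp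
end

section
/- Let k be a field with a ring endomorphism σ_k : k → k, let K be a separable algebraic closure of k, and let σ_K : K → K be a ring endomorphism with σ_K(algebraMap k K λ) = algebraMap k K (σ_k λ) for all λ ∈ k. Let R be a commutative k-algebra in which every element is a root of some monic separable polynomial over k, equipped with a ring endomorphism σ_R satisfying σ_R((algebraMap k R λ) · a) = (algebraMap k R (σ_k λ)) · σ_R(a) for all λ ∈ k, a ∈ R. Then: (1) for every k-algebra homomorphism ψ : R → K there is a unique k-algebra homomorphism σ(ψ) : R → K with σ_K(σ(ψ)(a)) = ψ(σ_R(a)) for all a ∈ R; and (2) if τ and τ′ are k-algebra automorphisms of K with σ_K ∘ τ′ = τ ∘ σ_K, then σ(τ ∘ ψ) = τ′ ∘ σ(ψ). -/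
/-!
For `ψ : R → K`, the homomorphism `ψ ∘ σ_R` is `k`-linear once its target carries the `k`-algebra
structure given by `σ_K`. It sends `a : R` to a root of the image under `σ_K` of a separable
polynomial over `k`. That polynomial already splits in `K`, so all these roots lie in `σ_K(K)`, and
`ψ ∘ σ_R` factors through the injective map `σ_K`. Both the uniqueness of the factorization and the
equivariance under automorphisms come from cancelling `σ_K` on the left.
-/

open Polynomial

theorem isSeparable_of_forall_exists_separable_aeval_eq_zero {k R : Type*} [Field k] [Ring R]
    [Algebra k R] (h : ∀ a : R, ∃ p : k[X], p.Separable ∧ aeval a p = 0) :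
    Algebra.IsSeparable k R where
  isSeparable' a :=
    let ⟨_, hsep, hroot⟩ := h a
    hsep.of_dvd (minpoly.dvd k a hroot)

theorem existsUnique_algHom_comp_eq {k R A B : Type*} [CommSemiring k] [Semiring R] [Algebra k R]
    [Semiring A] [Algebra k A] [Semiring B] {j : A →+* B} (hj : Function.Injective j)
    {f : R →+* B} (hf : f.comp (algebraMap k R) = j.comp (algebraMap k A))
    (hrange : ∀ a, f a ∈ Set.range j) :
    ∃! g : R →ₐ[k] A, ∀ a, j (g a) = f a := by
  choose g hg using hrange
  let gHom : R →ₐ[k] A :=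
    { toFun := g
      map_one' := hj (by simp only [hg, map_one])
      map_mul' := fun a b ↦ hj (by simp only [hg, map_mul])
      map_zero' := hj (by simp only [hg, map_zero])
      map_add' := fun a b ↦ hj (by simp only [hg, map_add])
      commutes' := fun r ↦ hj ((hg _).trans (RingHom.congr_fun hf r)) }
  exact ⟨gHom, hg, fun g' hg' ↦ AlgHom.ext fun a ↦ hj ((hg' a).trans (hg a).symm)⟩

theorem map_mem_range_of_isSeparable {k K R L : Type*} [Field k] [Field K] [Algebra k K]
    [IsSepClosed K] [Ring R] [Algebra k R] [CommRing L] [IsDomain L] {j : K →+* L} {f : R →+* L}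
    (hf : f.comp (algebraMap k R) = j.comp (algebraMap k K)) {a : R} (ha : IsSeparable k a) :
    f a ∈ Set.range j := by
  have hsplits : ((minpoly k a).map (algebraMap k K)).Splits := IsSepClosed.splits_codomain _ ha
  have hroot : (((minpoly k a).map (algebraMap k K)).map j).IsRoot (f a) := by
    rw [IsRoot.def, map_map, ← hf, eval_map, ← hom_eval₂, ← aeval_def, minpoly.aeval, map_zero]
  exact hsplits.mem_range_of_isRoot (map_ne_zero ha.ne_zero) hroot

theorem stmt8_general {k l K L R S : Type*} [Field k] [CommSemiring l]
    [Field K] [Algebra k K] [IsSepClosed K] [CommRing L] [IsDomain L] [Algebra l L]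
    [Ring R] [Algebra k R] [Algebra.IsSeparable k R] [Semiring S] [Algebra l S]
    {σk : k →+* l} {σK : K →+* L} {σR : R →+* S}
    (hσK : σK.comp (algebraMap k K) = (algebraMap l L).comp σk)
    (hσR : σR.comp (algebraMap k R) = (algebraMap l S).comp σk) :
    (∀ ψ : S →ₐ[l] L, ∃! ψ' : R →ₐ[k] K, ∀ a, σK (ψ' a) = ψ (σR a)) ∧
    (∀ (ψ : S →ₐ[l] L) (χ φ : R →ₐ[k] K) (τ : L →ₐ[l] L) (τ' : K →ₐ[k] K),
      (∀ x, σK (τ' x) = τ (σK x)) →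
      (∀ a, σK (χ a) = ψ (σR a)) →
      (∀ a, σK (φ a) = τ (ψ (σR a))) →
      ∀ a, φ a = τ' (χ a)) := by
  refine ⟨fun ψ ↦ ?_, fun ψ χ φ τ τ' hτ hχ hφ a ↦ σK.injective ?_⟩
  · have hcomp : ((ψ : S →+* L).comp σR).comp (algebraMap k R) = σK.comp (algebraMap k K) := by
      rw [RingHom.comp_assoc, hσR, ← RingHom.comp_assoc, ψ.comp_algebraMap, hσK]
    exact existsUnique_algHom_comp_eq σK.injective hcomp fun a ↦
      map_mem_range_of_isSeparable hcomp (Algebra.IsSeparable.isSeparable k a)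
  · calc σK (φ a) = τ (ψ (σR a)) := hφ a
      _ = τ (σK (χ a)) := by rw [hχ]
      _ = σK (τ' (χ a)) := (hτ _).symm

/-- Let `K` be a separable algebraic closure of the difference field
`(k, σₖ)` with extension `σ_K` of `σₖ`, and let `R` be an ind-étale `k`-σ-algebra with
σₖ-semilinear endomorphism `σ_R`. Then (1) every `k`-algebra homomorphism `ψ : R → K` admits
a unique `k`-algebra homomorphism `σ(ψ) : R → K` with `σ_K ∘ σ(ψ) = ψ ∘ σ_R`; and (2) for
`τ, τ' ∈ Gal(K/k)` with `σ_K ∘ τ' = τ ∘ σ_K` one has `σ(τ ∘ ψ) = τ' ∘ σ(ψ)`. -/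
theorem stmt8 {k K R : Type*} [Field k] [Field K] [Algebra k K] [IsSepClosure k K]
    (σk : k →+* k) (σK : K →+* K)
    (hext : ∀ lam : k, σK (algebraMap k K lam) = algebraMap k K (σk lam))
    [CommRing R] [Algebra k R]
    (hindetale : ∀ a : R, ∃ p : Polynomial k, p.Monic ∧ p.Separable ∧
      Polynomial.aeval a p = 0)
    (σR : R →+* R)
    (hσR : ∀ (lam : k) (a : R), σR (algebraMap k R lam * a) = algebraMap k R (σk lam) * σR a) :
    (∀ ψ : R →ₐ[k] K, ∃! ψ' : R →ₐ[k] K, ∀ a : R, σK (ψ' a) = ψ (σR a)) ∧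
    (∀ (ψ χ φ : R →ₐ[k] K) (τ τ' : K ≃ₐ[k] K),
      (∀ x : K, σK (τ' x) = τ (σK x)) →
      (∀ a : R, σK (χ a) = ψ (σR a)) →
      (∀ a : R, σK (φ a) = τ (ψ (σR a))) →
      ∀ a : R, φ a = τ' (χ a)) := by
  have : IsSepClosed K := IsSepClosure.sep_closed k
  have : Algebra.IsSeparable k R := isSeparable_of_forall_exists_separable_aeval_eq_zero fun a ↦
    (hindetale a).imp fun _ hp ↦ hp.2
  obtain ⟨hexists, hequiv⟩ := stmt8_general (S := R) (σR := σR) (RingHom.ext hext)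
    (RingHom.ext fun lam ↦ by simpa using hσR lam 1)
  exact ⟨hexists, fun ψ χ φ τ τ' ↦ hequiv ψ χ φ τ τ'⟩
end

section
/- Let Γ be a group, let ι be a finite index type, and for each i ∈ ι let H_i be a group on which Γ acts by group automorphisms. Assume each H_i is Γ-simple and noncommutative, i.e. H_i is nontrivial and not abelian, and every normal subgroup of H_i that is stable under the Γ-action equals {1} or H_i. Let Γ act on the product ∏_{i∈ι} H_i componentwise, and let N be a normal subgroup of ∏_{i∈ι} H_i that is stable under the Γ-action. Then there exist subgroups N_i ≤ H_i with N_i ∈ {{1}, H_i} for every i such that N = ∏_{i∈ι} N_i. -/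
/-!
Compare the projection `P i` of `N` to the `i`-th factor with the trace `Q i` of `N` on it, i.e.
the set of `h` such that the tuple with `i`-th entry `h` and all other entries `1` lies in `N`.
Commuting an element of `N` with a tuple supported at `i` kills every other coordinate, so
`⁅P i, H i⁆ ≤ Q i`. Both are `Γ`-stable and normal; since `H i` is `Γ`-simple and not commutative,
this forces `P i ≤ Q i`. As `N` lies between `∏ i, Q i` and `∏ i, P i`, it equals `∏ i, P i`.
-/

/-- `K` is `Γ`-stable: it is mapped into itself by every element of `Γ`. -/
def IsSMulStable (Γ : Type*) {G : Type*} [Group G] [SMul Γ G] (K : Subgroup G) : Prop :=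
  ∀ γ : Γ, ∀ x ∈ K, γ • x ∈ K

/-- `G` is `Γ`-simple: it is nontrivial and its only `Γ`-stable normal subgroups are `⊥` and `⊤`.
Only the underlying scalar multiplication of `Γ` on `G` enters the definition. -/
structure IsSMulSimple (Γ G : Type*) [Group G] [SMul Γ G] : Prop extends Nontrivial G where
  eq_bot_or_eq_top : ∀ K : Subgroup G, K.Normal → IsSMulStable Γ K → K = ⊥ ∨ K = ⊤

section Stable

variable {Γ G G' : Type*} [Group G] [Group G'] [SMul Γ G] [SMul Γ G'] {f : G →* G'}

lemma IsSMulStable.map {K : Subgroup G} (hK : IsSMulStable Γ K)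
    (hf : ∀ (γ : Γ) (x : G), f (γ • x) = γ • f x) : IsSMulStable Γ (K.map f) := by
  rintro γ _ ⟨x, hx, rfl⟩
  exact ⟨γ • x, hK γ x hx, hf γ x⟩

lemma IsSMulStable.comap {K : Subgroup G'} (hK : IsSMulStable Γ K)
    (hf : ∀ (γ : Γ) (x : G), f (γ • x) = γ • f x) : IsSMulStable Γ (K.comap f) := by
  intro γ x hx
  rw [Subgroup.mem_comap, hf]
  exact hK γ (f x) hx

lemma IsSMulSimple.le_of_commutator_top_le (hG : IsSMulSimple Γ G) (hcomm : ¬ IsMulCommutative G)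
    {P Q : Subgroup G} (hPnormal : P.Normal) (hPstable : IsSMulStable Γ P)
    (hQnormal : Q.Normal) (hQstable : IsSMulStable Γ Q) (hPQ : ⁅P, ⊤⁆ ≤ Q) : P ≤ Q := by
  rcases hG.eq_bot_or_eq_top P hPnormal hPstable with rfl | rfl
  · exact bot_le
  · rcases hG.eq_bot_or_eq_top Q hQnormal hQstable with rfl | rfl
    · exact absurd ((commutator_eq_bot_iff G).1 (le_bot_iff.1 hPQ)) hcomm
    · exact le_rfl

end Stable

section Pi

open scoped commutatorElement

variable {ι : Type*} [DecidableEq ι] {H : ι → Type*} [∀ i, Group (H i)]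

lemma mulSingle_commutatorElement_apply (x : ∀ i, H i) (i : ι) (h : H i) :
    Pi.mulSingle i ⁅x i, h⁆ = ⁅x, Pi.mulSingle i h⁆ := by
  ext j
  obtain rfl | hj := eq_or_ne j i
  · simp [commutatorElement_def]
  · simp [commutatorElement_def, hj]

lemma commutator_map_eval_le_comap_mulSingle (N : Subgroup (∀ i, H i)) [N.Normal] (i : ι) :
    ⁅N.map (Pi.evalMonoidHom H i), ⊤⁆ ≤ N.comap (MonoidHom.mulSingle H i) := by
  rw [Subgroup.commutator_le]
  rintro _ ⟨x, hx, rfl⟩ h -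
  have hmem : ⁅x, Pi.mulSingle i h⁆ ∈ N :=
    Subgroup.commutator_le_left N ⊤ (Subgroup.commutator_mem_commutator hx (Subgroup.mem_top _))
  rwa [← mulSingle_commutatorElement_apply] at hmem

lemma eq_pi_map_eval_of_map_eval_le_comap_mulSingle [Finite ι] {N : Subgroup (∀ i, H i)}
    (hN : ∀ i, N.map (Pi.evalMonoidHom H i) ≤ N.comap (MonoidHom.mulSingle H i)) :
    N = Subgroup.pi Set.univ fun i => N.map (Pi.evalMonoidHom H i) :=
  le_antisymm (Subgroup.le_pi_iff.2 fun _ _ => Subgroup.le_comap_map _ _)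
    (Subgroup.pi_le_iff.2 fun i => Subgroup.map_le_iff_le_comap.2 (hN i))

lemma mulSingle_smul_eq_smul_mulSingle {Γ : Type*} [Monoid Γ]
    [∀ i, MulDistribMulAction Γ (H i)] (γ : Γ) (i : ι) (h : H i) :
    (Pi.mulSingle i (γ • h) : ∀ i, H i) = γ • Pi.mulSingle i h :=
  Pi.mulSingle_op (fun _ => (γ • ·)) (fun _ => smul_one γ) i h

end Pi

theorem stmt13_general {Γ : Type*} [Monoid Γ] {ι : Type*} [Finite ι]
    (H : ι → Type*) [∀ i, Group (H i)] [∀ i, MulDistribMulAction Γ (H i)]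
    (hsimple : ∀ i, IsSMulSimple Γ (H i)) (hnoncomm : ∀ i, ¬ IsMulCommutative (H i))
    (N : Subgroup (∀ i, H i)) (hNnormal : N.Normal) (hNstable : IsSMulStable Γ N) :
    ∃ Ni : (i : ι) → Subgroup (H i), (∀ i, Ni i = ⊥ ∨ Ni i = ⊤) ∧
      N = Subgroup.pi Set.univ Ni := by
  classical
  have map_normal (i : ι) : (N.map (Pi.evalMonoidHom H i)).Normal :=
    hNnormal.map _ (Function.surjective_eval i)
  have map_stable (i : ι) : IsSMulStable Γ (N.map (Pi.evalMonoidHom H i)) :=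
    hNstable.map fun _ _ => rfl
  have comap_stable (i : ι) : IsSMulStable Γ (N.comap (MonoidHom.mulSingle H i)) :=
    hNstable.comap fun γ => mulSingle_smul_eq_smul_mulSingle γ i
  refine ⟨fun i => N.map (Pi.evalMonoidHom H i),
    fun i => (hsimple i).eq_bot_or_eq_top _ (map_normal i) (map_stable i),
    eq_pi_map_eval_of_map_eval_le_comap_mulSingle fun i => ?_⟩
  exact (hsimple i).le_of_commutator_top_le (hnoncomm i) (map_normal i) (map_stable i)
    (hNnormal.comap _) (comap_stable i) (commutator_map_eval_le_comap_mulSingle N i)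

/-- (Analogue of Lemma 5.12.) Let `Γ` act by automorphisms on each of
finitely many noncommutative Γ-simple groups `Hᵢ`, and componentwise on `∏ᵢ Hᵢ`. Every
Γ-stable normal subgroup `N` of `∏ᵢ Hᵢ` is of the form `∏ᵢ Nᵢ` with `Nᵢ ∈ {1, Hᵢ}`. -/
theorem stmt13 {Γ : Type*} [Group Γ] {ι : Type*} [Finite ι]
    (H : ι → Type*) [∀ i, Group (H i)] [∀ i, MulDistribMulAction Γ (H i)]
    (hnontriv : ∀ i, Nontrivial (H i))
    (hnoncomm : ∀ i, ∃ a b : H i, a * b ≠ b * a)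
    (hsimple : ∀ i, ∀ K : Subgroup (H i), K.Normal →
      (∀ (γ : Γ), ∀ x ∈ K, γ • x ∈ K) → K = ⊥ ∨ K = ⊤)
    (N : Subgroup (∀ i, H i)) (hNnormal : N.Normal)
    (hNstable : ∀ (γ : Γ), ∀ x ∈ N, (fun i => γ • x i) ∈ N) :
    ∃ Ni : (i : ι) → Subgroup (H i), (∀ i, Ni i = ⊥ ∨ Ni i = ⊤) ∧
      N = Subgroup.pi Set.univ Ni := by
  have not_comm (i : ι) : ¬ IsMulCommutative (H i) := fun _ =>
    let ⟨a, b, hab⟩ := hnoncomm i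
    hab (mul_comm' a b)
  exact stmt13_general H (fun i => ⟨hnontriv i, hsimple i⟩) not_comm N hNnormal hNstable
end

section
/- Let k be a field with a ring endomorphism σ_k : k → k, let A be a commutative k-algebra with a ring endomorphism σ_A satisfying σ_A((algebraMap k A λ) · a) = (algebraMap k A (σ_k λ)) · σ_A(a) for all λ ∈ k, a ∈ A, and let ε : A → k be a k-algebra homomorphism with ε(σ_A(a)) = σ_k(ε(a)) for all a ∈ A; set m = ker ε. Then the following are equivalent: (i) for every commutative k-algebra R (in the same universe as A) equipped with an injective ring endomorphism σ_R satisfying σ_R((algebraMap k R λ) · x) = (algebraMap k R (σ_k λ)) · σ_R(x), every k-algebra homomorphism ψ : A → R with ψ ∘ σ_A = σ_R ∘ ψ vanishes on m; (ii) for every f ∈ m there exists n ∈ ℕ with σ_A^n(f) = 0. Moreover, if (ii) holds and there is a finite subset B ⊆ A such that m is generated as an ideal by ⋃_{n∈ℕ} σ_A^n(B), then there exists n ∈ ℕ with σ_A^n(f) = 0 for all f ∈ m. -/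
universe u

/-!
The elements of `A` killed by some power of `σ` form an ideal `N` with `σ⁻¹(N) = N`. Hence `σ`
descends to an injective endomorphism of `A ⧸ N`, and `A → A ⧸ N` is the universal difference
homomorphism to a σ-reduced algebra: all of them kill an ideal `I` if and only if `I ≤ N`.
Each `ker (σ ^ n)` is a σ-ideal and `N` is their increasing union, so as soon as it contains a
finite set, one of the `ker (σ ^ n)` contains the σ-ideal generated by that set.
-/

section EventualKernel

variable {A : Type*} [Semiring A] (σ : A →+* A)

theorem ker_pow_mono : Monotone fun n : ℕ => RingHom.ker (σ ^ n) :=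
  monotone_nat_of_le_succ fun n a (ha : (σ ^ n) a = 0) => by
    rw [RingHom.mem_ker, pow_succ', RingHom.mul_def, RingHom.comp_apply, ha, map_zero]

theorem ker_pow_le_comap (n : ℕ) : RingHom.ker (σ ^ n) ≤ (RingHom.ker (σ ^ n)).comap σ := by
  rw [RingHom.comap_ker, ← RingHom.mul_def, ← pow_succ]
  exact ker_pow_mono σ n.le_succ

/-- The ideal of all elements killed by some power of `σ`, i.e. the smallest ideal `I` with
`σ⁻¹(I) = I` (the reflexive closure of the zero ideal, in the language of difference algebra).
It is encoded as the supremum of the increasing chain of the ideals `ker (σ ^ n)`. -/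
def eventualKer : Ideal A := ⨆ n : ℕ, RingHom.ker (σ ^ n)

theorem coe_eventualKer : (eventualKer σ : Set A) = ⋃ n : ℕ, (RingHom.ker (σ ^ n) : Set A) :=
  Submodule.coe_iSup_of_directed _ (ker_pow_mono σ).directed_le

variable {σ}

theorem mem_eventualKer {a : A} : a ∈ eventualKer σ ↔ ∃ n : ℕ, σ^[n] a = 0 := by
  rw [← SetLike.mem_coe, coe_eventualKer, Set.mem_iUnion]
  rfl

theorem map_mem_eventualKer_iff {a : A} : σ a ∈ eventualKer σ ↔ a ∈ eventualKer σ := by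
  simp only [mem_eventualKer, ← Function.iterate_succ_apply]
  constructor
  · rintro ⟨n, hn⟩
    exact ⟨n + 1, hn⟩
  · rintro ⟨n, hn⟩
    exact ⟨n, by rw [Function.iterate_succ_apply', hn, map_zero]⟩

variable (σ) in
theorem comap_eventualKer : (eventualKer σ).comap σ = eventualKer σ :=
  Ideal.ext fun _ => map_mem_eventualKer_iff

theorem eventualKer_le_ker_of_semiconj {R : Type*} [Semiring R] {τ : R →+* R}
    (hτ : Function.Injective τ) {ψ : A →+* R} (hψ : Function.Semiconj ψ σ τ) :
    eventualKer σ ≤ RingHom.ker ψ := by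
  intro a ha
  obtain ⟨n, hn⟩ := mem_eventualKer.1 ha
  apply hτ.iterate n
  calc τ^[n] (ψ a) = ψ (σ^[n] a) := (hψ.iterate_right n a).symm
    _ = 0 := by rw [hn, map_zero]
    _ = τ^[n] 0 := (iterate_map_zero τ n).symm

theorem exists_subset_ker_pow_of_subset_eventualKer {B : Finset A}
    (hB : (B : Set A) ⊆ eventualKer σ) : ∃ n : ℕ, (B : Set A) ⊆ RingHom.ker (σ ^ n) := by
  rw [coe_eventualKer] at hB
  exact Directed.exists_mem_subset_of_finset_subset_biUnion (ker_pow_mono σ).directed_le hB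

theorem span_iUnion_iterate_image_le_iff {I : Ideal A} (hI : I ≤ I.comap σ) {B : Set A} :
    Ideal.span (⋃ n : ℕ, σ^[n] '' B) ≤ I ↔ B ⊆ I := by
  have hmaps : Set.MapsTo σ I I := hI
  rw [Ideal.span_le, Set.iUnion_subset_iff]
  refine ⟨fun h => by simpa using h 0, fun hB n => ?_⟩
  exact ((hmaps.iterate n).mono_left hB).image_subset

theorem exists_span_iUnion_iterate_image_le_ker_pow {B : Finset A}
    (hB : Ideal.span (⋃ n : ℕ, σ^[n] '' (B : Set A)) ≤ eventualKer σ) :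
    ∃ n : ℕ, Ideal.span (⋃ m : ℕ, σ^[m] '' (B : Set A)) ≤ RingHom.ker (σ ^ n) := by
  rw [span_iUnion_iterate_image_le_iff (comap_eventualKer σ).ge] at hB
  obtain ⟨n, hn⟩ := exists_subset_ker_pow_of_subset_eventualKer hB
  exact ⟨n, (span_iUnion_iterate_image_le_iff (ker_pow_le_comap σ n)).2 hn⟩

end EventualKernel

theorem quotientMap_algebraMap_mul {k A : Type*} [CommSemiring k] [Ring A] [Algebra k A]
    {φ : k → k} {σ : A →+* A}
    (hσ : ∀ (c : k) (a : A), σ (algebraMap k A c * a) = algebraMap k A (φ c) * σ a)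
    {I : Ideal A} [I.IsTwoSided] (hI : I ≤ I.comap σ) (c : k) (x : A ⧸ I) :
    Ideal.quotientMap I σ hI (algebraMap k (A ⧸ I) c * x) =
      algebraMap k (A ⧸ I) (φ c) * Ideal.quotientMap I σ hI x := by
  obtain ⟨a, rfl⟩ := Ideal.Quotient.mk_surjective x
  exact congrArg (Ideal.Quotient.mk I) (hσ c a)

theorem stmt14_general {k : Type*} [CommSemiring k] (σk : k →+* k)
    {A : Type u} [CommRing A] [Algebra k A] (σA : A →+* A)
    (hσA : ∀ (c : k) (a : A), σA (algebraMap k A c * a) = algebraMap k A (σk c) * σA a)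
    (I : Ideal A) :
    ((∀ (R : Type u) [CommRing R] [Algebra k R] (σR : R →+* R),
        Function.Injective σR →
        (∀ (c : k) (x : R), σR (algebraMap k R c * x) = algebraMap k R (σk c) * σR x) →
        ∀ ψ : A →ₐ[k] R, (∀ a : A, ψ (σA a) = σR (ψ a)) → ∀ f ∈ I, ψ f = 0) ↔
      ∀ f ∈ I, ∃ n : ℕ, σA^[n] f = 0) ∧
    ((∀ f ∈ I, ∃ n : ℕ, σA^[n] f = 0) →
      (∃ B : Finset A, I = Ideal.span (⋃ n : ℕ, σA^[n] '' (B : Set A))) →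
      ∃ n : ℕ, ∀ f ∈ I, σA^[n] f = 0) := by
  simp only [← mem_eventualKer]
  refine ⟨⟨fun hkill f hf => ?_, fun hI R _ _ σR hσR _ ψ hψ f hf => ?_⟩, ?_⟩
  · have hcomap := comap_eventualKer σA
    have hmk : Ideal.Quotient.mkₐ k (eventualKer σA) f = 0 :=
      hkill _ (Ideal.quotientMap _ σA hcomap.ge) (Ideal.quotientMap_injective' hcomap.le)
        (quotientMap_algebraMap_mul hσA hcomap.ge) _ (fun _ => rfl) f hf
    exact Ideal.Quotient.eq_zero_iff_mem.1 hmk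
  · exact eventualKer_le_ker_of_semiconj hσR (ψ := (ψ : A →+* R)) hψ (hI f hf)
  · rintro hI ⟨B, rfl⟩
    exact exists_span_iUnion_iterate_image_le_ker_pow hI

/-- (Lemma 6.3 of the paper.) For a `k`-σ-algebra `A` with compatible
character `ε : A → k` and augmentation ideal `m = ker ε`: every difference `k`-algebra
homomorphism from `A` to a σ-reduced `k`-σ-algebra kills `m` iff every element of `m` is
annihilated by some power of `σ`; and if moreover `m` is σ-generated by a finite set, then a
single power of `σ` annihilates all of `m`. -/
theorem stmt14 {k : Type*} [Field k] (σk : k →+* k)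
    {A : Type u} [CommRing A] [Algebra k A]
    (σA : A →+* A)
    (hσA : ∀ (lam : k) (a : A),
      σA (algebraMap k A lam * a) = algebraMap k A (σk lam) * σA a)
    (ε : A →ₐ[k] k) (hε : ∀ a : A, ε (σA a) = σk (ε a)) :
    ((∀ (R : Type u) [CommRing R] [Algebra k R] (σR : R →+* R),
        Function.Injective σR →
        (∀ (lam : k) (x : R),
          σR (algebraMap k R lam * x) = algebraMap k R (σk lam) * σR x) →
        ∀ ψ : A →ₐ[k] R, (∀ a : A, ψ (σA a) = σR (ψ a)) →
          ∀ f ∈ RingHom.ker (ε : A →+* k), ψ f = 0) ↔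
      (∀ f ∈ RingHom.ker (ε : A →+* k), ∃ n : ℕ, (⇑σA)^[n] f = 0)) ∧
    ((∀ f ∈ RingHom.ker (ε : A →+* k), ∃ n : ℕ, (⇑σA)^[n] f = 0) →
      (∃ B : Finset A, RingHom.ker (ε : A →+* k) =
        Ideal.span (⋃ n : ℕ, (⇑σA)^[n] '' (B : Set A))) →
      ∃ n : ℕ, ∀ f ∈ RingHom.ker (ε : A →+* k), (⇑σA)^[n] f = 0) :=
  stmt14_general σk σA hσA (RingHom.ker (ε : A →+* k))
end

section
/- Let k be a field with a ring endomorphism σ_k : k → k, let A be a reduced commutative k-algebra that is finite-dimensional as a k-vector space, equipped with a ring endomorphism σ_A satisfying σ_A((algebraMap k A λ) · a) = (algebraMap k A (σ_k λ)) · σ_A(a) for all λ ∈ k, a ∈ A, and let ε : A → k be a k-algebra homomorphism with ε(σ_A(a)) = σ_k(ε(a)) for all a ∈ A. Assume Spec A is σ-connected, i.e. Spec A cannot be written as a disjoint union of two nonempty Zariski-closed subsets each stable under the map p ↦ σ_A⁻¹(p). Then there exists n ∈ ℕ such that σ_A^n(f) = 0 for every f ∈ ker ε. -/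
/-!
The kernel of `ε` is a point of `Spec A` fixed by `p ↦ σ⁻¹(p)`. The points that eventually reach it
and those that never do form two stable sets. `Spec A` is discrete, so both are closed, and
σ-connectedness forces every point to reach `ker ε`. `Spec A` is also finite, so a single `n` works
for all points; then `σⁿ(ker ε)` lies in every prime, hence is zero since `A` is reduced.
-/

open Filter Function Set

section SelfMap

variable {X : Type*}

/-- Connectedness of a space with a self-map (σ-connectedness when `f` is the map `p ↦ σ⁻¹(p)` on a
prime spectrum): there is no partition into two nonempty closed forward-invariant sets. The empty
space counts as connected. -/
def IsSelfMapConnected [TopologicalSpace X] (f : X → X) : Prop :=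
  ¬ ∃ U V : Set X, U.Nonempty ∧ V.Nonempty ∧ Disjoint U V ∧ U ∪ V = univ ∧
    IsClosed U ∧ IsClosed V ∧ MapsTo f U U ∧ MapsTo f V V

/-- The basin of `y` under the self-map `f`: the points some iterate of `f` sends exactly to `y`. -/
def basin (f : X → X) (y : X) : Set X :=
  {x | ∃ n : ℕ, f^[n] x = y}

variable {f : X → X} {y : X}

theorem mapsTo_basin (hy : IsFixedPt f y) : MapsTo f (basin f y) (basin f y) := by
  rintro x ⟨n, hn⟩
  exact ⟨n, by rw [← iterate_succ_apply, iterate_succ_apply', hn, hy]⟩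

theorem mapsTo_compl_basin (f : X → X) (y : X) : MapsTo f (basin f y)ᶜ (basin f y)ᶜ :=
  fun _ hx ⟨n, hn⟩ => hx ⟨n + 1, hn⟩

theorem IsSelfMapConnected.basin_eq_univ [TopologicalSpace X] (hf : IsSelfMapConnected f)
    (hy : IsFixedPt f y) (hclopen : IsClopen (basin f y)) : basin f y = univ := by
  by_contra hne
  exact hf ⟨basin f y, (basin f y)ᶜ, ⟨y, 0, rfl⟩, nonempty_compl.mpr hne, disjoint_compl_right,
    union_compl_self _, hclopen.isClosed, hclopen.compl.isClosed, mapsTo_basin hy,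
    mapsTo_compl_basin f y⟩

theorem eventually_iterate_eq_of_mem_basin (hy : IsFixedPt f y) {x : X} (hx : x ∈ basin f y) :
    ∀ᶠ n in atTop, f^[n] x = y := by
  obtain ⟨m, hm⟩ := hx
  filter_upwards [eventually_ge_atTop m] with n hn
  obtain ⟨d, rfl⟩ := Nat.exists_eq_add_of_le' hn
  rw [iterate_add_apply, hm, hy.iterate d]

theorem exists_forall_iterate_eq_of_basin_eq_univ [Finite X] (hy : IsFixedPt f y)
    (hbasin : basin f y = univ) : ∃ n : ℕ, ∀ x, f^[n] x = y :=
  (eventually_all.mpr fun x =>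
    eventually_iterate_eq_of_mem_basin hy (hbasin ▸ mem_univ x)).exists

end SelfMap

theorem comap_ker_eq_ker_of_semiconj {A B : Type*} [Semiring A] [Semiring B] {σ : A →+* A}
    {τ : B →+* B} {ε : A →+* B} (hτ : Injective τ) (hε : Semiconj ε σ τ) :
    (RingHom.ker ε).comap σ = RingHom.ker ε := by
  ext a
  rw [Ideal.mem_comap, RingHom.mem_ker, RingHom.mem_ker, hε a, map_eq_zero_iff τ hτ]

section PrimeSpectrum

variable {A B : Type*} [CommSemiring A] [CommSemiring B]

theorem primeSpectrum_comap_iterate (σ : A →+* A) (n : ℕ) :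
    (PrimeSpectrum.comap σ)^[n] = PrimeSpectrum.comap (σ ^ n) := by
  induction n with
  | zero => rfl
  | succ n ih => rw [iterate_succ, ih, pow_succ', RingHom.mul_def, PrimeSpectrum.comap_comp]

theorem map_eq_zero_of_forall_comap_eq [IsReduced B] {τ : A →+* B} {p : PrimeSpectrum A}
    (hτ : ∀ q, PrimeSpectrum.comap τ q = p) {a : A} (ha : a ∈ p.asIdeal) : τ a = 0 := by
  refine (nilpotent_iff_mem_prime.mpr fun q hq => ?_).eq_zero
  rwa [← hτ ⟨q, hq⟩] at ha

end PrimeSpectrum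

theorem stmt15_general {A : Type*} [CommRing A] [IsArtinianRing A] [IsReduced A]
    (σ : A →+* A) (p : PrimeSpectrum A) (hp : IsFixedPt (PrimeSpectrum.comap σ) p)
    (hconn : IsSelfMapConnected (PrimeSpectrum.comap σ)) :
    ∃ n : ℕ, ∀ a ∈ p.asIdeal, σ^[n] a = 0 := by
  have hbasin : basin (PrimeSpectrum.comap σ) p = univ :=
    hconn.basin_eq_univ hp (isClopen_discrete _)
  obtain ⟨n, hn⟩ := exists_forall_iterate_eq_of_basin_eq_univ hp hbasin
  rw [primeSpectrum_comap_iterate] at hn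
  refine ⟨n, fun a ha => ?_⟩
  rw [← RingHom.coe_pow]
  exact map_eq_zero_of_forall_comap_eq hn ha

/-- (Lemma 6.6 of the paper.) A reduced finite `k`-σ-algebra `A` with
compatible character `ε` whose spectrum is σ-connected is σ-infinitesimal: some power of `σ`
annihilates the augmentation ideal `ker ε`. -/
theorem stmt15 {k A : Type*} [Field k] [CommRing A] [Algebra k A]
    [IsReduced A] [FiniteDimensional k A]
    (σk : k →+* k) (σA : A →+* A)
    (hσA : ∀ (lam : k) (a : A),
      σA (algebraMap k A lam * a) = algebraMap k A (σk lam) * σA a)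
    (ε : A →ₐ[k] k) (hε : ∀ a : A, ε (σA a) = σk (ε a))
    (hconn : ¬ ∃ X Y : Set (PrimeSpectrum A),
      X.Nonempty ∧ Y.Nonempty ∧ Disjoint X Y ∧ X ∪ Y = Set.univ ∧
      IsClosed X ∧ IsClosed Y ∧
      (∀ p ∈ X, PrimeSpectrum.comap σA p ∈ X) ∧
      (∀ p ∈ Y, PrimeSpectrum.comap σA p ∈ Y)) :
    ∃ n : ℕ, ∀ f ∈ RingHom.ker (ε : A →+* k), (⇑σA)^[n] f = 0 := by
  have : IsArtinianRing A := IsArtinianRing.of_finite k A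
  exact stmt15_general σA ⟨RingHom.ker (ε : A →+* k), RingHom.ker_isPrime _⟩
    (PrimeSpectrum.ext (comap_ker_eq_ker_of_semiconj σk.injective hε)) hconn
end
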